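/- Let φ, φ' > 0 be constants and m : S¹_ℓ → ℝ smooth with max_θ m²(θ) > φ'/φ². Then the quantity (φ/2)∫(m'h − mh')² dθ − (φ'/(2φ))∫((m')² + (h')²) dθ is unbounded above as h ranges over smooth functions on S¹_ℓ with φ∫h² dθ = 1; i.e., for every M there exists such an h with the quantity exceeding M. -/

import Mathlib

/-!
The leading coefficient `a = φ/2 · m² - φ'/(2φ)` of the quadratic form `h ↦ ∫ a h'² + b h h' + c h²`
is positive somewhere. Take a periodic bump `g` supported where `a > 0`. Since
`cos² + sin² = 1`, the values of the form at `g cos(Nθ)` and `g sin(Nθ)` add up to its value at `g`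
plus `N² ∫ a g²`, so one of the two is positive for large `N`. Replacing `c` by `c - M` turns
positivity into a lower bound `M` for the Rayleigh quotient, and a rescaling normalizes the
function.
-/

open Function Set
open scoped ContDiff

section FirstOrderForm

variable {a b c g h : ℝ → ℝ} {l : ℝ}

/-- The quadratic form `h ↦ ∫₀ˡ a h'² + b h h' + c h²`, through which the curvature expression is
studied. It involves `deriv h`, so it is meaningful for differentiable `h` only. -/
noncomputable def firstOrderForm (a b c : ℝ → ℝ) (l : ℝ) (h : ℝ → ℝ) : ℝ :=
  ∫ θ in 0..l, a θ * deriv h θ ^ 2 + b θ * (h θ * deriv h θ) + c θ * h θ ^ 2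

lemma firstOrderForm_const_mul (k : ℝ) :
    firstOrderForm a b c l (fun θ ↦ k * h θ) = k ^ 2 * firstOrderForm a b c l h := by
  simp only [firstOrderForm, deriv_const_mul_field, ← intervalIntegral.integral_const_mul]
  congr 1 with θ
  ring

lemma firstOrderForm_sub_const (ha : Continuous a) (hb : Continuous b) (hc : Continuous c)
    (hh : ContDiff ℝ 1 h) (M : ℝ) :
    firstOrderForm a b (fun θ ↦ c θ - M) l h =
      firstOrderForm a b c l h - M * ∫ θ in 0..l, h θ ^ 2 := by
  rw [firstOrderForm, firstOrderForm, ← intervalIntegral.integral_const_mul,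
    ← intervalIntegral.integral_sub (Continuous.intervalIntegrable (by fun_prop) _ _)
      (Continuous.intervalIntegrable (by fun_prop) _ _)]
  congr 1 with θ
  ring

lemma deriv_mul_cos_const_mul {θ : ℝ} (hg : DifferentiableAt ℝ g θ) (N : ℝ) :
    deriv (fun x ↦ g x * Real.cos (N * x)) θ =
      deriv g θ * Real.cos (N * θ) - N * g θ * Real.sin (N * θ) := by
  have hlin : HasDerivAt (fun x ↦ N * x) N θ := by simpa using (hasDerivAt_id θ).const_mul N
  exact (hg.hasDerivAt.mul hlin.cos).deriv.trans (by ring)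

lemma deriv_mul_sin_const_mul {θ : ℝ} (hg : DifferentiableAt ℝ g θ) (N : ℝ) :
    deriv (fun x ↦ g x * Real.sin (N * x)) θ =
      deriv g θ * Real.sin (N * θ) + N * g θ * Real.cos (N * θ) := by
  have hlin : HasDerivAt (fun x ↦ N * x) N θ := by simpa using (hasDerivAt_id θ).const_mul N
  exact (hg.hasDerivAt.mul hlin.sin).deriv.trans (by ring)

lemma firstOrderForm_mul_cos_add_mul_sin (ha : Continuous a) (hb : Continuous b)
    (hc : Continuous c) (hg : ContDiff ℝ 1 g) (N : ℝ) :
    firstOrderForm a b c l (fun θ ↦ g θ * Real.cos (N * θ)) +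
        firstOrderForm a b c l (fun θ ↦ g θ * Real.sin (N * θ)) =
      firstOrderForm a b c l g + N ^ 2 * ∫ θ in 0..l, a θ * g θ ^ 2 := by
  have hgd : Differentiable ℝ g := hg.differentiable one_ne_zero
  simp only [firstOrderForm, deriv_mul_cos_const_mul (hgd _), deriv_mul_sin_const_mul (hgd _)]
  rw [← intervalIntegral.integral_const_mul,
    ← intervalIntegral.integral_add (Continuous.intervalIntegrable (by fun_prop) _ _)
      (Continuous.intervalIntegrable (by fun_prop) _ _),
    ← intervalIntegral.integral_add (Continuous.intervalIntegrable (by fun_prop) _ _)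
      (Continuous.intervalIntegrable (by fun_prop) _ _)]
  congr 1 with θ
  linear_combination (a θ * (deriv g θ ^ 2 + N ^ 2 * g θ ^ 2) + b θ * (g θ * deriv g θ) +
    c θ * g θ ^ 2) * Real.sin_sq_add_cos_sq (N * θ)

lemma exists_contDiff_periodic_eqOn_zero_pos {K : Set ℝ} {θ₀ : ℝ} (hl : 0 < l)
    (hK : IsCompact K) (hKl : K ⊆ Ioo (θ₀ - l) (θ₀ + l)) (hθ₀ : θ₀ ∉ K) :
    ∃ g : ℝ → ℝ, ContDiff ℝ ∞ g ∧ Periodic g l ∧ EqOn g 0 K ∧ 0 < g θ₀ := by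
  set f : ℝ → ℝ := fun θ ↦ Real.cos (2 * Real.pi / l * (θ - θ₀)) with hf
  have hω : 0 < 2 * Real.pi / l := by positivity
  have hωl : 2 * Real.pi / l * l = 2 * Real.pi := div_mul_cancel₀ _ hl.ne'
  have hf_lt : ∀ θ ∈ K, f θ < 1 := fun θ hθ ↦ by
    refine (Real.cos_le_one _).lt_of_ne fun h1 ↦ hθ₀ ?_
    obtain ⟨hlt, hgt⟩ := hKl hθ
    rw [Real.cos_eq_one_iff_of_lt_of_lt (by nlinarith) (by nlinarith)] at h1
    rwa [← sub_eq_zero.1 ((mul_eq_zero.1 h1).resolve_left hω.ne')]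
  obtain ⟨κ, hκ, hfκ⟩ : ∃ κ < 1, ∀ θ ∈ K, f θ ≤ κ := by
    rcases K.eq_empty_or_nonempty with rfl | hne
    · exact ⟨0, one_pos, by simp⟩
    · obtain ⟨θ, hθ, hmax⟩ := hK.exists_isMaxOn hne (f := f) (by fun_prop)
      exact ⟨f θ, hf_lt θ hθ, fun _ hx ↦ hmax hx⟩
  refine ⟨fun θ ↦ expNegInvGlue (f θ - κ), expNegInvGlue.contDiff.comp (by fun_prop),
    fun θ ↦ ?_, fun θ hθ ↦ expNegInvGlue.zero_of_nonpos (sub_nonpos.2 (hfκ θ hθ)),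
    expNegInvGlue.pos_of_pos ?_⟩
  · have hf_periodic : f (θ + l) = f θ := by
      simp only [hf, add_sub_right_comm, mul_add, hωl, Real.cos_add_two_pi]
    simp only [hf_periodic]
  · simpa [hf] using hκ

lemma exists_contDiff_periodic_integral_mul_sq_pos (hl : 0 < l) (ha : Continuous a)
    (hpos : ∃ θ ∈ Icc 0 l, 0 < a θ) :
    ∃ g : ℝ → ℝ, ContDiff ℝ ∞ g ∧ Periodic g l ∧ 0 < ∫ θ in 0..l, a θ * g θ ^ 2 := by
  obtain ⟨θ₁, hθ₁, haθ₁⟩ := hpos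
  obtain ⟨θ₀, haθ₀ : 0 < a θ₀, hθ₀⟩ : ({θ | 0 < a θ} ∩ Ioo 0 l).Nonempty :=
    mem_closure_iff.1 (closure_Ioo hl.ne ▸ hθ₁) _ (isOpen_lt continuous_const ha) haθ₁
  have hK : IsCompact (Icc 0 l ∩ {θ | a θ ≤ 0}) :=
    isCompact_Icc.inter_right (isClosed_le ha continuous_const)
  obtain ⟨g, hg, hgl, hgK, hgθ₀⟩ := exists_contDiff_periodic_eqOn_zero_pos (θ₀ := θ₀) hl hK
    (fun θ hθ ↦ ⟨by linarith [hθ.1.1, hθ₀.2], by linarith [hθ.1.2, hθ₀.1]⟩)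
    (fun hθ ↦ hθ.2.not_gt haθ₀)
  have hg₀ : Continuous g := hg.continuous
  refine ⟨g, hg, hgl, intervalIntegral.integral_pos hl (by fun_prop) (fun θ hθ ↦ ?_)
    ⟨θ₀, Ioo_subset_Icc_self hθ₀, by positivity⟩⟩
  rcases le_or_gt (a θ) 0 with haθ | haθ
  · simp [hgK ⟨Ioc_subset_Icc_self hθ, haθ⟩]
  · positivity

lemma periodic_comp_nat_mul_two_pi_div {f : ℝ → ℝ} (hf : Periodic f (2 * Real.pi)) (hl : l ≠ 0)
    (n : ℕ) : Periodic (fun θ ↦ f (n * (2 * Real.pi / l) * θ)) l := fun θ ↦ by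
  have hshift : n * (2 * Real.pi / l) * (θ + l) =
      n * (2 * Real.pi / l) * θ + n * (2 * Real.pi) := by
    field_simp
  simp only [hshift, hf.nat_mul n _]

lemma exists_firstOrderForm_pos (hl : 0 < l) (ha : Continuous a) (hb : Continuous b)
    (hc : Continuous c) (hpos : ∃ θ ∈ Icc 0 l, 0 < a θ) :
    ∃ h : ℝ → ℝ, ContDiff ℝ ∞ h ∧ Periodic h l ∧ 0 < firstOrderForm a b c l h := by
  obtain ⟨g, hg, hgl, hD⟩ := exists_contDiff_periodic_integral_mul_sq_pos hl ha hpos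
  set D := ∫ θ in 0..l, a θ * g θ ^ 2
  have hω : 0 < 2 * Real.pi / l := by positivity
  obtain ⟨n, hn⟩ : ∃ n : ℕ, -firstOrderForm a b c l g < (n * (2 * Real.pi / l)) ^ 2 * D :=
    (((Filter.tendsto_pow_atTop two_ne_zero).comp
      (tendsto_natCast_atTop_atTop.atTop_mul_const hω)).atTop_mul_const hD
        |>.eventually_gt_atTop _).exists
  set N : ℝ := n * (2 * Real.pi / l)
  have hsum := firstOrderForm_mul_cos_add_mul_sin (l := l) ha hb hc
    (hg.of_le (mod_cast le_top)) N
  by_cases hcos : 0 < firstOrderForm a b c l (fun θ ↦ g θ * Real.cos (N * θ))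
  · exact ⟨fun θ ↦ g θ * Real.cos (N * θ), by fun_prop,
      hgl.mul (periodic_comp_nat_mul_two_pi_div Real.cos_periodic hl.ne' n), hcos⟩
  · exact ⟨fun θ ↦ g θ * Real.sin (N * θ), by fun_prop,
      hgl.mul (periodic_comp_nat_mul_two_pi_div Real.sin_periodic hl.ne' n), by linarith⟩

lemma integral_sq_pos_of_periodic (hl : 0 < l) (hh : Continuous h) (hhl : Periodic h l)
    (hne : h ≠ 0) : 0 < ∫ θ in 0..l, h θ ^ 2 := by
  obtain ⟨x, hx⟩ := Function.ne_iff.1 hne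
  obtain ⟨y, hy, hxy⟩ := hhl.exists_mem_Ico₀ hl x
  have hy0 : h y ≠ 0 := hxy ▸ hx
  exact intervalIntegral.integral_pos hl (hh.pow 2).continuousOn (fun _ _ ↦ sq_nonneg _)
    ⟨y, Ico_subset_Icc_self hy, by positivity⟩

theorem exists_integral_sq_eq_lt_firstOrderForm (hl : 0 < l) (ha : Continuous a)
    (hb : Continuous b) (hc : Continuous c) (hpos : ∃ θ ∈ Icc 0 l, 0 < a θ)
    {r : ℝ} (hr : 0 < r) (M : ℝ) :
    ∃ h : ℝ → ℝ, ContDiff ℝ ∞ h ∧ Periodic h l ∧ ∫ θ in 0..l, h θ ^ 2 = r ∧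
      M < firstOrderForm a b c l h := by
  obtain ⟨f, hf, hfl, hform⟩ :=
    exists_firstOrderForm_pos (c := fun θ ↦ c θ - M / r) hl ha hb (by fun_prop) hpos
  have hf0 : f ≠ 0 := by
    rintro rfl
    simp [firstOrderForm] at hform
  have hI := integral_sq_pos_of_periodic hl hf.continuous hfl hf0
  rw [firstOrderForm_sub_const ha hb hc (hf.of_le (mod_cast le_top)), sub_pos] at hform
  set I := ∫ θ in 0..l, f θ ^ 2
  have hk : √(r / I) ^ 2 = r / I := Real.sq_sqrt (by positivity)
  refine ⟨fun θ ↦ √(r / I) * f θ, by fun_prop, fun θ ↦ by simp only [hfl θ], ?_, ?_⟩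
  · simp only [mul_pow, intervalIntegral.integral_const_mul, hk]
    exact div_mul_cancel₀ r hI.ne'
  · rw [firstOrderForm_const_mul, hk]
    calc M = r / I * (M / r * I) := by field_simp
      _ < r / I * firstOrderForm a b c l f := by gcongr

lemma curvature_eq_firstOrderForm_sub {m : ℝ → ℝ} (hm : ContDiff ℝ 1 m) (hh : ContDiff ℝ 1 h)
    (p q : ℝ) :
    p * (∫ θ in 0..l, (deriv m θ * h θ - m θ * deriv h θ) ^ 2) -
        q * (∫ θ in 0..l, deriv m θ ^ 2 + deriv h θ ^ 2) =
      firstOrderForm (fun θ ↦ p * m θ ^ 2 - q) (fun θ ↦ -(2 * p * (m θ * deriv m θ)))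
        (fun θ ↦ p * deriv m θ ^ 2) l h - q * ∫ θ in 0..l, deriv m θ ^ 2 := by
  simp only [firstOrderForm, ← intervalIntegral.integral_const_mul]
  rw [← intervalIntegral.integral_sub (Continuous.intervalIntegrable (by fun_prop) _ _)
      (Continuous.intervalIntegrable (by fun_prop) _ _),
    ← intervalIntegral.integral_sub (Continuous.intervalIntegrable (by fun_prop) _ _)
      (Continuous.intervalIntegrable (by fun_prop) _ _)]
  congr 1 with θ
  ring

end FirstOrderForm

theorem stmt13_general (l φ φ' : ℝ) (hl : 0 < l) (hφ : 0 < φ) (m : ℝ → ℝ) (hm : ContDiff ℝ 1 m)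
    (hbig : ∃ θ ∈ Icc 0 l, φ' / φ ^ 2 < m θ ^ 2) (M : ℝ) :
    ∃ h : ℝ → ℝ, ContDiff ℝ ∞ h ∧ Periodic h l ∧ (φ * ∫ θ in 0..l, h θ ^ 2 = 1) ∧
      M < φ / 2 * (∫ θ in 0..l, (deriv m θ * h θ - m θ * deriv h θ) ^ 2) -
        φ' / (2 * φ) * (∫ θ in 0..l, deriv m θ ^ 2 + deriv h θ ^ 2) := by
  have hpos : ∃ θ ∈ Icc 0 l, 0 < φ / 2 * m θ ^ 2 - φ' / (2 * φ) := by
    obtain ⟨θ, hθ, hlt⟩ := hbig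
    refine ⟨θ, hθ, ?_⟩
    calc 0 < φ / 2 * (m θ ^ 2 - φ' / φ ^ 2) := mul_pos (half_pos hφ) (sub_pos.2 hlt)
      _ = φ / 2 * m θ ^ 2 - φ' / (2 * φ) := by field_simp
  obtain ⟨h, hh, hhl, hnorm, hform⟩ := exists_integral_sq_eq_lt_firstOrderForm
    (b := fun θ ↦ -(2 * (φ / 2) * (m θ * deriv m θ))) (c := fun θ ↦ φ / 2 * deriv m θ ^ 2)
    hl (by fun_prop) (by fun_prop) (by fun_prop) hpos (inv_pos.2 hφ)
    (M + φ' / (2 * φ) * ∫ θ in 0..l, deriv m θ ^ 2)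
  refine ⟨h, hh, hhl, by rw [hnorm, mul_inv_cancel₀ hφ.ne'], ?_⟩
  rw [curvature_eq_firstOrderForm_sub hm (hh.of_le (mod_cast le_top))]
  exact lt_sub_iff_add_lt.2 hform

/-- 'Only if' direction: if max m² > φ'/φ², the curvature expression is unbounded
above over normalized h. -/
theorem stmt13 (l φ φ' : ℝ) (hl : 0 < l) (hφ : 0 < φ) (hφ' : 0 < φ')
    (m : ℝ → ℝ) (hm : ContDiff ℝ (⊤ : ℕ∞) m) (hmp : Function.Periodic m l)
    (hbig : ∃ θ ∈ Set.Icc (0:ℝ) l, φ' / φ ^ 2 < (m θ) ^ 2) :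
    ∀ M : ℝ, ∃ h : ℝ → ℝ, ContDiff ℝ (⊤ : ℕ∞) h ∧ Function.Periodic h l ∧
      (φ * ∫ θ in (0:ℝ)..l, (h θ) ^ 2 = 1) ∧
      M < φ / 2 * (∫ θ in (0:ℝ)..l, (deriv m θ * h θ - m θ * deriv h θ) ^ 2)
            - φ' / (2 * φ) *
              (∫ θ in (0:ℝ)..l, (deriv m θ) ^ 2 + (deriv h θ) ^ 2) :=
  stmt13_general l φ φ' hl hφ m (hm.of_le (mod_cast le_top)) hbig
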